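/- arXiv:2504.10530 — 4 statements merged into one kernel-verified Lean document; each statement's English description precedes it below -/
import Mathlib

section
/- Let (Ω, ℱ, P) be a probability space, β > 0, and q_n = e^{−β} β^n / n! for n ∈ ℕ be the Poisson(β) probability mass function, with cumulative distribution function F(n) = Σ_{i=0}^n q_i. Let (I_n)_{n∈ℕ} be a sequence of {0,1}-valued random variables that is pointwise nonincreasing in n (I_{n+1} ≤ I_n for all n) with I_0 = 1 almost surely, and define M : Ω → ℕ ∪ {∞} by M = sup{n : I_n = 1}. Then Σ_{n∈ℕ} q_n E[I_n] = E[G(M)], where G(m) = F(m) for m ∈ ℕ and G(∞) = 1. -/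
open MeasureTheory
open scoped ProbabilityTheory

/-- The Poisson(β) probability mass function `q_n = e^{-β} β^n / n!`. -/
noncomputable def poissonPMF (β : ℝ) (n : ℕ) : ℝ := Real.exp (-β) * β ^ n / n.factorial

/-- The Poisson(β) cumulative distribution function `F(n) = Σ_{i=0}^n q_i`. -/
noncomputable def poissonCDF (β : ℝ) (n : ℕ) : ℝ := ∑ i ∈ Finset.range (n + 1), poissonPMF β i

/-- Extension `G` of the Poisson CDF to `ℕ∞` with `G(∞) = 1`. -/
noncomputable def poissonCDF' (β : ℝ) (m : ℕ∞) : ℝ :=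
  if m = ⊤ then 1 else poissonCDF β m.toNat

theorem poissonPMF_nonneg {β : ℝ} (hβ : 0 ≤ β) (n : ℕ) : 0 ≤ poissonPMF β n := by
  unfold poissonPMF
  positivity

theorem hasSum_poissonPMF {β : ℝ} (hβ : 0 ≤ β) : HasSum (poissonPMF β) 1 :=
  ProbabilityTheory.hasSum_one_poissonMeasure ⟨β, hβ⟩

theorem hasSum_poissonPMF_of_le {β : ℝ} (hβ : 0 ≤ β) (m : ℕ∞) :
    HasSum (fun n : ℕ => if (n : ℕ∞) ≤ m then poissonPMF β n else 0) (poissonCDF' β m) := by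
  induction m using ENat.recTopCoe with
  | top => simpa [poissonCDF'] using hasSum_poissonPMF hβ
  | coe k =>
    have hsum : poissonCDF' β k =
        ∑ n ∈ Finset.range (k + 1), if (n : ℕ∞) ≤ k then poissonPMF β n else 0 := by
      simp only [poissonCDF', ENat.natCast_ne_top, if_false, ENat.toNat_natCast, poissonCDF]
      refine Finset.sum_congr rfl fun n hn => (if_pos ?_).symm
      exact_mod_cast Nat.lt_succ_iff.mp (Finset.mem_range.mp hn)
    rw [hsum]
    refine hasSum_sum_of_ne_finset_zero fun n hn => if_neg fun hle => hn ?_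
    exact Finset.mem_range.mpr (Nat.lt_succ_iff.mpr (by exact_mod_cast hle))

/-- For a lower set `s` of naturals containing `0`, membership is being at most its supremum. -/
theorem IsLowerSet.mem_iff_le_iSup_natCast {s : Set ℕ} (hs : IsLowerSet s) (h0 : 0 ∈ s) (n : ℕ) :
    n ∈ s ↔ (n : ℕ∞) ≤ ⨆ (k : ℕ) (_ : k ∈ s), (k : ℕ∞) := by
  refine ⟨fun h => le_iSup₂_of_le n h le_rfl, fun hle => ?_⟩
  rcases n with _ | n
  · exact h0
  by_contra hn
  have hsup : ⨆ (k : ℕ) (_ : k ∈ s), (k : ℕ∞) ≤ n := by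
    refine iSup₂_le fun k hk => ?_
    have hlt : k < n + 1 := lt_of_not_ge fun hge => hn (hs hge hk)
    exact_mod_cast Nat.lt_succ_iff.mp hlt
  have hcontra : ((n + 1 : ℕ) : ℕ∞) ≤ n := hle.trans hsup
  exact Nat.not_succ_le_self n (by exact_mod_cast hcontra)

/-- Unbiasedness of the conditional Monte Carlo estimator:
`Σ_n q_n E[I_n] = E[G(M)]` where `M = sup {n : I_n = 1}`. -/
theorem tsum_poissonPMF_mul_integral_eq_integral_poissonCDF'
    {Ω : Type*} [MeasureSpace Ω] [IsProbabilityMeasure (ℙ : Measure Ω)]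
    (β : ℝ) (hβ : 0 < β)
    (I : ℕ → Ω → ℝ) (hmeas : ∀ n, Measurable (I n))
    (h01 : ∀ n ω, I n ω = 0 ∨ I n ω = 1)
    (hmono : ∀ n ω, I (n + 1) ω ≤ I n ω)
    (hI0 : ∀ᵐ ω ∂(ℙ : Measure Ω), I 0 ω = 1)
    (M : Ω → ℕ∞)
    (hM : ∀ ω, M ω = ⨆ (n : ℕ) (_ : I n ω = 1), (n : ℕ∞)) :
    ∑' n : ℕ, poissonPMF β n * ∫ ω, I n ω = ∫ ω, poissonCDF' β (M ω) := by
  have hlower (ω : Ω) : IsLowerSet {n | I n ω = 1} := by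
    intro b a hab hb
    have hle : I b ω ≤ I a ω :=
      antitone_nat_of_succ_le (f := fun n => I n ω) (fun n => hmono n ω) hab
    rw [Set.mem_ofPred_eq] at hb
    exact (h01 a ω).resolve_left fun ha => by linarith
  have hpoint : ∀ᵐ ω ∂(ℙ : Measure Ω),
      ∑' n, poissonPMF β n * I n ω = poissonCDF' β (M ω) := by
    filter_upwards [hI0] with ω hω
    rw [← (hasSum_poissonPMF_of_le hβ.le (M ω)).tsum_eq]
    refine tsum_congr fun n => ?_
    have hiff : I n ω = 1 ↔ (n : ℕ∞) ≤ M ω := by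
      rw [hM ω]
      exact (hlower ω).mem_iff_le_iSup_natCast hω n
    simp only [← hiff]
    rcases h01 n ω with h | h <;> simp [h]
  have hbound (n : ℕ) (ω : Ω) : ‖I n ω‖ ≤ 1 := by
    rcases h01 n ω with h | h <;> simp [h]
  have hint (n : ℕ) : Integrable (fun ω => poissonPMF β n * I n ω) (ℙ : Measure Ω) :=
    (Integrable.of_bound (hmeas n).aestronglyMeasurable 1
      (Filter.Eventually.of_forall (hbound n))).const_mul _
  have hnorm (n : ℕ) : ∫ ω, ‖poissonPMF β n * I n ω‖ ≤ poissonPMF β n := by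
    have hle : ∫ ω, ‖poissonPMF β n * I n ω‖ ≤ ∫ _ : Ω, poissonPMF β n := by
      refine integral_mono (hint n).norm (integrable_const _) fun ω => ?_
      simp only [norm_mul, Real.norm_of_nonneg (poissonPMF_nonneg hβ.le n)]
      exact mul_le_of_le_one_right (poissonPMF_nonneg hβ.le n) (hbound n ω)
    simpa using hle
  have hsummable : Summable fun n => ∫ ω, ‖poissonPMF β n * I n ω‖ :=
    (hasSum_poissonPMF hβ.le).summable.of_nonneg_of_le
      (fun n => integral_nonneg fun ω => norm_nonneg _) hnorm
  simp_rw [← integral_const_mul]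
  rw [integral_tsum_of_summable_integral_norm hint hsummable]
  exact integral_congr_ae hpoint
end

section
/- Let (Ω, ℱ, P) be a probability space, β > 0, and q_n = e^{−β} β^n / n! for n ∈ ℕ. Let (I_n)_{n∈ℕ} be a sequence of {0,1}-valued random variables that is pointwise nonincreasing in n, and set p_n = E[I_n]. Then E[(Σ_{n∈ℕ} q_n I_n)²] = Σ_{n∈ℕ} q_n² p_n + 2 Σ_{m<n} q_m q_n p_n. -/
open MeasureTheory
open scoped ProbabilityTheory

/-- The square of a partial sum, ordered by the larger of the two indices. -/
theorem sq_sum_range_eq_sum_range {R : Type*} [CommSemiring R] (a : ℕ → R) (N : ℕ) :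
    (∑ n ∈ Finset.range N, a n) ^ 2 =
      ∑ n ∈ Finset.range N, (a n ^ 2 + 2 * (a n * ∑ m ∈ Finset.range n, a m)) := by
  induction N with
  | zero => simp
  | succ N ih =>
    rw [Finset.sum_range_succ, Finset.sum_range_succ, ← ih]
    ring

/-- The square of a nonnegative series, ordered by the larger of the two indices. -/
theorem hasSum_sq_tsum_of_nonneg {a : ℕ → ℝ} (ha : Summable a) (h0 : ∀ n, 0 ≤ a n) :
    HasSum (fun n ↦ a n ^ 2 + 2 * (a n * ∑ m ∈ Finset.range n, a m)) ((∑' n, a n) ^ 2) := by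
  have hS n : 0 ≤ ∑ m ∈ Finset.range n, a m := Finset.sum_nonneg fun m _ ↦ h0 m
  rw [hasSum_iff_tendsto_nat_of_nonneg fun n ↦
    add_nonneg (sq_nonneg _) (mul_nonneg zero_le_two (mul_nonneg (h0 n) (hS n)))]
  simpa only [sq_sum_range_eq_sum_range] using ha.hasSum.tendsto_sum_nat.pow 2

theorem summable_poissonPMF (β : ℝ) : Summable (poissonPMF β) :=
  ((Real.summable_pow_div_factorial β).mul_left (Real.exp (-β))).congr fun _ ↦
    (mul_div_assoc _ _ _).symm

/-- Second moment of the conditional Monte Carlo estimator: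
`E[(Σ_n q_n I_n)²] = Σ_n q_n² p_n + 2 Σ_{m<n} q_m q_n p_n`. -/
theorem integral_sq_tsum_poissonPMF_mul_indicator
    {Ω : Type*} [MeasureSpace Ω] [IsProbabilityMeasure (ℙ : Measure Ω)]
    (β : ℝ) (hβ : 0 < β)
    (I : ℕ → Ω → ℝ) (hmeas : ∀ n, Measurable (I n))
    (h01 : ∀ n ω, I n ω = 0 ∨ I n ω = 1)
    (hmono : ∀ n ω, I (n + 1) ω ≤ I n ω)
    (p : ℕ → ℝ) (hp : ∀ n, p n = ∫ ω, I n ω) :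
    ∫ ω, (∑' n : ℕ, poissonPMF β n * I n ω) ^ 2 =
      ∑' n : ℕ, (poissonPMF β n) ^ 2 * p n +
        2 * ∑' n : ℕ, (poissonPMF β n * p n * ∑ m ∈ Finset.range n, poissonPMF β m) := by
  have hq0 := poissonPMF_nonneg hβ.le
  have hq := summable_poissonPMF β
  set q := poissonPMF β
  have hS0 n : 0 ≤ ∑ m ∈ Finset.range n, q m := Finset.sum_nonneg fun m _ ↦ hq0 m
  have hI0 n ω : 0 ≤ I n ω := by rcases h01 n ω with h | h <;> simp [h]
  have hI1 n ω : I n ω ≤ 1 := by rcases h01 n ω with h | h <;> simp [h]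
  have hanti ω : Antitone fun n ↦ I n ω := antitone_nat_of_succ_le fun n ↦ hmono n ω
  have hmul {m n : ℕ} (hmn : m ≤ n) (ω : Ω) : I n ω * I m ω = I n ω := by
    rcases h01 n ω with h | h
    · simp [h]
    · rw [le_antisymm (hI1 m ω) (h ▸ hanti ω hmn), mul_one]
  have hint n : Integrable (I n) (ℙ : Measure Ω) :=
    .of_bound (hmeas n).aestronglyMeasurable 1 <| .of_forall fun ω ↦ by
      rw [Real.norm_of_nonneg (hI0 n ω)]
      exact hI1 n ω
  have hp0 n : 0 ≤ p n := hp n ▸ integral_nonneg (hI0 n)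
  have hp1 n : p n ≤ 1 := by
    rw [hp n]
    simpa using integral_mono (hint n) (integrable_const (1 : ℝ)) (hI1 n)
  let c n := q n ^ 2 + 2 * (q n * ∑ m ∈ Finset.range n, q m)
  have hc0 n : 0 ≤ c n :=
    add_nonneg (sq_nonneg _) (mul_nonneg zero_le_two (mul_nonneg (hq0 n) (hS0 n)))
  have hc : Summable c := (hasSum_sq_tsum_of_nonneg hq hq0).summable
  have hsq : Summable fun n ↦ q n ^ 2 * p n :=
    hc.of_nonneg_of_le (fun n ↦ mul_nonneg (sq_nonneg _) (hp0 n)) fun n ↦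
      (mul_le_of_le_one_right (sq_nonneg _) (hp1 n)).trans
        (le_add_of_nonneg_right (mul_nonneg zero_le_two (mul_nonneg (hq0 n) (hS0 n))))
  have hcp : Summable fun n ↦ c n * p n :=
    hc.of_nonneg_of_le (fun n ↦ mul_nonneg (hc0 n) (hp0 n)) fun n ↦
      mul_le_of_le_one_right (hc0 n) (hp1 n)
  have hcross : Summable fun n ↦ 2 * (q n * p n * ∑ m ∈ Finset.range n, q m) :=
    (hcp.sub hsq).congr fun n ↦ by simp only [c]; ring
  have hpoint ω : (∑' n, q n * I n ω) ^ 2 = ∑' n, c n * I n ω := by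
    have hsum : Summable fun n ↦ q n * I n ω :=
      hq.of_nonneg_of_le (fun n ↦ mul_nonneg (hq0 n) (hI0 n ω)) fun n ↦
        mul_le_of_le_one_right (hq0 n) (hI1 n ω)
    rw [← (hasSum_sq_tsum_of_nonneg hsum fun n ↦ mul_nonneg (hq0 n) (hI0 n ω)).tsum_eq]
    refine tsum_congr fun n ↦ ?_
    have hprefix : q n * I n ω * ∑ m ∈ Finset.range n, q m * I m ω =
        q n * (∑ m ∈ Finset.range n, q m) * I n ω := by
      rw [Finset.mul_sum, Finset.mul_sum, Finset.sum_mul]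
      refine Finset.sum_congr rfl fun m hm ↦ ?_
      linear_combination q n * q m * hmul (Finset.mem_range.1 hm).le ω
    simp only [c]
    linear_combination q n ^ 2 * hmul le_rfl ω + 2 * hprefix
  calc ∫ ω, (∑' n, q n * I n ω) ^ 2
      = ∫ ω, ∑' n, c n * I n ω := integral_congr_ae (.of_forall hpoint)
    _ = ∑' n, ∫ ω, c n * I n ω := by
      refine (integral_tsum_of_summable_integral_norm (fun n ↦ (hint n).const_mul (c n)) ?_).symm
      refine hcp.congr fun n ↦ ?_
      simp_rw [Real.norm_of_nonneg (mul_nonneg (hc0 n) (hI0 n _)), integral_const_mul, hp]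
    _ = ∑' n, (q n ^ 2 * p n + 2 * (q n * p n * ∑ m ∈ Finset.range n, q m)) := by
      refine tsum_congr fun n ↦ ?_
      rw [integral_const_mul, ← hp]
      simp only [c]
      ring
    _ = _ := by rw [hsq.tsum_add hcross, tsum_mul_left]
end

section
/- Let (Ω, ℱ, P) be a probability space, let υ > 0 and b > 0 be real numbers, let n ≥ 1 be an integer with (n−1)υ < b, and let V₀ = 0 ≤ V₁ ≤ V₂ ≤ ⋯ ≤ V_{n−1} be random variables such that V_i − V_{i−1} ≤ υ almost surely for each i (hence V_i ≤ iυ almost surely). Then E[∏_{i=1}^{n−1} (1 − V_i/b)] ≥ exp(−(1/b) Σ_{i=1}^{n−1} E[V_i]) · exp(−Σ_{i=1}^{n−1} Σ_{j=2}^{∞} (iυ)^j / b^j). -/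
open MeasureTheory
open scoped ProbabilityTheory

lemma exp_neg_sub_tsum_pow_le_one_sub {x y : ℝ} (hx : 0 ≤ x) (hxy : x ≤ y) (hy : y < 1) :
    Real.exp (-x - ∑' j : ℕ, y ^ (j + 2)) ≤ 1 - x := by
  have hx1 : 0 < 1 - x := by linarith
  have hy1 : 0 < 1 - y := by linarith
  have hsum : ∑' j : ℕ, y ^ (j + 2) = y ^ 2 / (1 - y) := by
    simp_rw [pow_add, tsum_mul_right, tsum_geometric_of_lt_one (hx.trans hxy) hy]
    field_simp
  have hle : x ^ 2 / (1 - x) ≤ y ^ 2 / (1 - y) := by gcongr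
  have hlog := Real.one_sub_inv_le_log_of_pos hx1
  have heq : 1 - (1 - x)⁻¹ = -x - x ^ 2 / (1 - x) := by
    field_simp
    ring
  rw [hsum, ← Real.le_log_iff_exp_le hx1]
  linarith

lemma ae_mem_Icc_of_increments_le {Ω : Type*} [MeasurableSpace Ω] {μ : Measure Ω}
    {υ : ℝ} {V : ℕ → Ω → ℝ}
    (hV0 : ∀ᵐ ω ∂μ, V 0 ω = 0)
    (hmono : ∀ i, ∀ᵐ ω ∂μ, V i ω ≤ V (i + 1) ω)
    (hstep : ∀ i, ∀ᵐ ω ∂μ, V (i + 1) ω - V i ω ≤ υ) :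
    ∀ᵐ ω ∂μ, ∀ i : ℕ, V i ω ∈ Set.Icc 0 (i * υ) := by
  filter_upwards [hV0, ae_all_iff.2 hmono, ae_all_iff.2 hstep] with ω h0 hm hs i
  induction i with
  | zero => simp [h0]
  | succ k ih =>
    have := hm k
    have := hs k
    refine ⟨by linarith [ih.1], ?_⟩
    push_cast
    linarith [ih.2]

/-- Lemma 3: lower bound on `E[∏_{i=1}^{n−1} (1 − V_i/b)]` for a nondecreasing sequence
of random volumes `V_0 = 0 ≤ V_1 ≤ ⋯` with increments at most `υ` and `(n−1)υ < b`. -/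
theorem integral_prod_one_sub_div_ge
    {Ω : Type*} [MeasureSpace Ω] [IsProbabilityMeasure (ℙ : Measure Ω)]
    (υ b : ℝ) (hυ : 0 < υ) (hb : 0 < b)
    (n : ℕ) (hn : 1 ≤ n) (hnb : ((n : ℝ) - 1) * υ < b)
    (V : ℕ → Ω → ℝ) (hmeas : ∀ i, Measurable (V i))
    (hV0 : ∀ᵐ ω ∂(ℙ : Measure Ω), V 0 ω = 0)
    (hmono : ∀ i, ∀ᵐ ω ∂(ℙ : Measure Ω), V i ω ≤ V (i + 1) ω)
    (hstep : ∀ i, ∀ᵐ ω ∂(ℙ : Measure Ω), V (i + 1) ω - V i ω ≤ υ) :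
    Real.exp (-(1 / b) * ∑ i ∈ Finset.Ico 1 n, ∫ ω, V i ω) *
        Real.exp (-(∑ i ∈ Finset.Ico 1 n, ∑' j : ℕ, ((i : ℝ) * υ) ^ (j + 2) / b ^ (j + 2))) ≤
      ∫ ω, ∏ i ∈ Finset.Ico 1 n, (1 - V i ω / b) := by
  have hbd := ae_mem_Icc_of_increments_le hV0 hmono hstep
  have hlt : ∀ i ∈ Finset.Ico 1 n, (i : ℝ) * υ / b < 1 := by
    intro i hi
    have hin : (i : ℝ) + 1 ≤ n := by exact_mod_cast (Finset.mem_Ico.1 hi).2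
    rw [div_lt_one hb]
    refine lt_of_le_of_lt ?_ hnb
    gcongr
    linarith
  have hVint : ∀ i, Integrable (V i) (ℙ : Measure Ω) := fun i =>
    Integrable.of_bound (hmeas i).aestronglyMeasurable (i * υ) <| by
      filter_upwards [hbd] with ω h
      rw [Real.norm_of_nonneg (h i).1]
      exact (h i).2
  simp_rw [← div_pow]
  set S : ℕ → ℝ := fun i => ∑' j : ℕ, ((i : ℝ) * υ / b) ^ (j + 2)
  set Y : Ω → ℝ := fun ω => ∑ i ∈ Finset.Ico 1 n, (-(V i ω / b) - S i) with hY
  have hterm : ∀ i, Integrable (fun ω => -(V i ω / b) - S i) (ℙ : Measure Ω) := fun i =>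
    ((hVint i).div_const b).neg.sub (integrable_const _)
  have hYint : Integrable Y (ℙ : Measure Ω) := integrable_finsetSum _ fun i _ => hterm i
  have hle : ∀ᵐ ω ∂(ℙ : Measure Ω),
      Real.exp (Y ω) ≤ ∏ i ∈ Finset.Ico 1 n, (1 - V i ω / b) := by
    filter_upwards [hbd] with ω h
    rw [hY, Real.exp_sum]
    refine Finset.prod_le_prod (fun _ _ => (Real.exp_pos _).le) fun i hi => ?_
    exact exp_neg_sub_tsum_pow_le_one_sub (div_nonneg (h i).1 hb.le)
      (div_le_div_of_nonneg_right (h i).2 hb.le) (hlt i hi)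
  have hprod : Integrable (fun ω => ∏ i ∈ Finset.Ico 1 n, (1 - V i ω / b)) (ℙ : Measure Ω) := by
    refine Integrable.of_bound (by fun_prop) 1 ?_
    filter_upwards [hbd] with ω h
    rw [Real.norm_eq_abs, Finset.abs_prod]
    refine Finset.prod_le_one (fun _ _ => abs_nonneg _) fun i hi => ?_
    have h0 : 0 ≤ V i ω / b := div_nonneg (h i).1 hb.le
    have h1 : V i ω / b ≤ i * υ / b := div_le_div_of_nonneg_right (h i).2 hb.le
    rw [abs_le]
    constructor <;> linarith [hlt i hi]
  have hexp : Integrable (fun ω => Real.exp (Y ω)) (ℙ : Measure Ω) := by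
    refine hprod.mono' (Real.continuous_exp.comp_aestronglyMeasurable
      hYint.aestronglyMeasurable) ?_
    filter_upwards [hle] with ω h
    rwa [Real.norm_of_nonneg (Real.exp_pos _).le]
  have hYval : ∫ ω, Y ω =
      (-(1 / b) * ∑ i ∈ Finset.Ico 1 n, ∫ ω, V i ω) + -∑ i ∈ Finset.Ico 1 n, S i := by
    rw [hY, integral_finsetSum _ fun i _ => hterm i, Finset.mul_sum, ← Finset.sum_neg_distrib,
      ← Finset.sum_add_distrib]
    refine Finset.sum_congr rfl fun i _ => ?_
    rw [integral_sub ((hVint i).div_const b).fun_neg (integrable_const _), integral_neg,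
      integral_div, integral_const, probReal_univ, one_smul]
    ring
  rw [← Real.exp_add, ← hYval]
  calc Real.exp (∫ ω, Y ω) ≤ ∫ ω, Real.exp (Y ω) :=
        convexOn_exp.map_integral_le Real.continuous_exp.continuousOn isClosed_univ
          (by simp) hYint hexp
    _ ≤ _ := integral_mono_ae hexp hprod hle
end

section
/- Let υ > 0, β > 0, δ ∈ ℝ, and let n ∈ ℕ satisfy n ≤ 2β and nυ ≤ β^δ/2. Then Σ_{i=1}^{n−1} Σ_{j=2}^{∞} (iυ)^j / β^{jδ} ≤ (16/3) υ² β^{3−2δ}. -/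
/-- A geometric series of ratio at most `1 / 2`, started at the quadratic term, is at most twice
that term. -/
lemma tsum_pow_add_two_le {x : ℝ} (hx0 : 0 ≤ x) (hx : x ≤ 1 / 2) :
    ∑' j : ℕ, x ^ (j + 2) ≤ 2 * x ^ 2 := by
  simp_rw [pow_add]
  rw [tsum_mul_right, tsum_geometric_of_lt_one hx0 (by linarith)]
  gcongr
  exact inv_le_of_inv_le₀ (by norm_num) (by linarith)

lemma sum_Ico_one_sq_le (n : ℕ) : ∑ i ∈ Finset.Ico 1 n, (i : ℝ) ^ 2 ≤ (n : ℝ) ^ 3 / 3 := by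
  induction n with
  | zero => simp
  | succ k ih =>
    rcases Nat.eq_zero_or_pos k with rfl | hk
    · norm_num
    · rw [Finset.sum_Ico_succ_top hk]
      push_cast
      nlinarith [(Nat.cast_nonneg k : (0 : ℝ) ≤ k)]

/-- Second assertion of Lemma 4 (Eq. (A.4)): for `n ≤ 2β` and `nυ ≤ β^δ/2`,
`Σ_{i=1}^{n−1} Σ_{j=2}^∞ (iυ)^j / β^{jδ} ≤ (16/3) υ² β^{3−2δ}`. -/
theorem tail_series_bound (υ β δ : ℝ) (hυ : 0 < υ) (hβ : 0 < β)
    (n : ℕ) (hn : (n : ℝ) ≤ 2 * β) (hnυ : (n : ℝ) * υ ≤ β ^ δ / 2) :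
    ∑ i ∈ Finset.Ico 1 n, ∑' j : ℕ, ((i : ℝ) * υ) ^ (j + 2) / (β ^ δ) ^ (j + 2) ≤
      (16 / 3) * υ ^ 2 * β ^ (3 - 2 * δ) := by
  have hB : 0 < β ^ δ := Real.rpow_pos_of_pos hβ δ
  have hpow : β ^ (3 - 2 * δ) = β ^ 3 / (β ^ δ) ^ 2 := by
    rw [Real.rpow_sub hβ, mul_comm, Real.rpow_mul hβ.le]
    norm_cast
  calc ∑ i ∈ Finset.Ico 1 n, ∑' j : ℕ, ((i : ℝ) * υ) ^ (j + 2) / (β ^ δ) ^ (j + 2)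
      ≤ ∑ i ∈ Finset.Ico 1 n, 2 * (υ / β ^ δ) ^ 2 * (i : ℝ) ^ 2 := by
        refine Finset.sum_le_sum fun i hi => ?_
        have hin : (i : ℝ) ≤ n := by exact_mod_cast (Finset.mem_Ico.mp hi).2.le
        have hratio : (i : ℝ) * υ / β ^ δ ≤ 1 / 2 := by
          rw [div_le_iff₀ hB]
          linarith [mul_le_mul_of_nonneg_right hin hυ.le]
        simp_rw [← div_pow]
        exact (tsum_pow_add_two_le (by positivity) hratio).trans_eq (by ring)
    _ = 2 * (υ / β ^ δ) ^ 2 * ∑ i ∈ Finset.Ico 1 n, (i : ℝ) ^ 2 := by rw [Finset.mul_sum]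
    _ ≤ 2 * (υ / β ^ δ) ^ 2 * ((2 * β) ^ 3 / 3) := by
        gcongr
        exact (sum_Ico_one_sq_le n).trans (by gcongr)
    _ = (16 / 3) * υ ^ 2 * β ^ (3 - 2 * δ) := by
        rw [hpow]
        ring
end
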